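/- Let γ > 0 and φ̄₀ > 0, and set φ̄_i = 3^i·φ̄₀ for i ≥ 0 and β_i = (9/(2π³))·γ/i² for i ≥ 1. Define a real sequence by ẽ₀ = 0 and ẽ_{i+1} = 4·β_{i+1}·φ̄_i + 3·ẽ_i for i ≥ 0. Then ẽ_i ≤ γ·φ̄_i/π for every i ≥ 0. -/

import Mathlib

/-!
Dividing the recursion by `3 ^ i` makes it telescope: `e i / 3 ^ i` is `6 γ φ₀ / π ^ 3` times the
partial sum of `1 / j ^ 2` over `1 ≤ j ≤ i`. By Euler's identity `∑ 1 / j ^ 2 = π ^ 2 / 6`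
(`hasSum_zeta_two`) that partial sum is at most `π ^ 2 / 6`, so the quotient is at most `γ φ₀ / π`.
-/

open Real

/-- Let γ > 0 and φ₀ > 0, set φbar_i = 3^i·φ₀ and β_i = (9/(2π³))·γ/i².
If e₀ = 0 and e_{i+1} = 4·β_{i+1}·φbar_i + 3·e_i, then e_i ≤ γ·φbar_i/π for all i. -/
theorem error_recursion_bound (γ φ₀ : ℝ) (hγ : 0 < γ) (hφ₀ : 0 < φ₀)
    (φbar : ℕ → ℝ) (hφbar : ∀ i, φbar i = 3 ^ i * φ₀)
    (β : ℕ → ℝ) (hβ : ∀ i : ℕ, 1 ≤ i → β i = (9 / (2 * π ^ 3)) * γ / (i : ℝ) ^ 2)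
    (e : ℕ → ℝ) (he0 : e 0 = 0)
    (he : ∀ i : ℕ, e (i + 1) = 4 * β (i + 1) * φbar i + 3 * e i) :
    ∀ i : ℕ, e i ≤ γ * φbar i / π := by
  -- The `j = 0` term of the sum is `1 / 0 = 0`, so the sum effectively starts at `j = 1`.
  have closed : ∀ i : ℕ, e i = 6 * γ * φ₀ / π ^ 3 * 3 ^ i *
      ∑ j ∈ Finset.range (i + 1), (1 : ℝ) / (j : ℝ) ^ 2 := by
    intro i
    induction i with
    | zero => simp [he0]
    | succ k ih =>
      rw [he, hβ (k + 1) (by omega), hφbar, ih, Finset.sum_range_succ _ (k + 1)]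
      have hk : ((k + 1 : ℕ) : ℝ) ≠ 0 := by positivity
      have hπ := pi_ne_zero
      field_simp
      ring
  intro i
  have hS : ∑ j ∈ Finset.range (i + 1), (1 : ℝ) / (j : ℝ) ^ 2 ≤ π ^ 2 / 6 :=
    sum_le_hasSum _ (fun j _ => by positivity) hasSum_zeta_two
  calc e i = 6 * γ * φ₀ / π ^ 3 * 3 ^ i *
        ∑ j ∈ Finset.range (i + 1), (1 : ℝ) / (j : ℝ) ^ 2 := closed i
    _ ≤ 6 * γ * φ₀ / π ^ 3 * 3 ^ i * (π ^ 2 / 6) := by gcongr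
    _ = γ * φbar i / π := by
      rw [hφbar]
      have hπ := pi_ne_zero
      field_simp
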